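/- Let δ be an increment function of size n and let [P,Q] be a linear interval of height k ≥ 2 in the alt-Tamari poset Tam^δ_n. Then [P,Q] is a left interval or a right interval: either P = A d^k C B and Q = A C d^k B where C is the δ-excursion in P of its first up step, or P = A d C_1⋯C_k B and Q = A C_1⋯C_k d B where each C_j is the δ-excursion in P of its first up step. -/

import Mathlib

/-!
Common definitions.  A letter of a word is a `Bool`: `true` is an up step `u`,
`false` is a down step `d`.  Positions in words are 0-based.
-/

/-- A (possibly empty) Dyck word: as many `u`'s as `d`'s, and every
prefix has at least as many `u`'s as `d`'s. -/
def IsDyckPath (w : List Bool) : Prop :=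
  w.count true = w.count false ∧ ∀ p, p <+: w → p.count false ≤ p.count true

/-- A Dyck word of size `n`: `n` up steps, `n` down steps, every prefix has
at least as many `u`'s as `d`'s. -/
def IsDyckWord (n : ℕ) (w : List Bool) : Prop :=
  w.count true = n ∧ w.count false = n ∧ ∀ p, p <+: w → p.count false ≤ p.count true

/-- The set of Dyck words of size `n`. -/
def DyckSet (n : ℕ) : Set (List Bool) := {w | IsDyckWord n w}

/-- An increment function: a `{0,1}`-valued function (the paper's `δ : {1,…,n} → {0,1}`;
only the values on `{1,…,n}` are ever used). -/
def IsIncFun (δ : ℕ → ℤ) : Prop := ∀ i, δ i = 0 ∨ δ i = 1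

/-- The 0-based position in `w` of the `i`-th up step `u_i` (`i` is 1-based). -/
def upPos (w : List Bool) (i : ℕ) : ℕ :=
  ((List.range w.length).filter fun q => w.getD q false = true).getD (i - 1) 0

/-- `h_i(w)`: the (1-based, between 1 and 2n) position of the up step `u_i` in `w`. -/
def hpos (w : List Bool) (i : ℕ) : ℕ := upPos w i + 1

/-- The change of δ-altitude produced by the letter at position `q` of `w`:
the up step `u_i` contributes `δ i`, a down step contributes `-1`. -/
def stepVal (δ : ℕ → ℤ) (w : List Bool) (q : ℕ) : ℤ :=
  if w.getD q false = true then δ ((w.take (q + 1)).count true) else -1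

/-- The δ-elevation of the factor of `w` occupying positions `a, …, b-1`. -/
def elev (δ : ℕ → ℤ) (w : List Bool) (a b : ℕ) : ℤ :=
  ∑ q ∈ Finset.Ico a b, stepVal δ w q

/-- `C` is the δ-excursion of the up step of `w` at position `p`:
the smallest (nonempty) factor of `w` starting at `p` whose δ-elevation is `0`. -/
def IsDeltaExcAt (δ : ℕ → ℤ) (w : List Bool) (p : ℕ) (C : List Bool) : Prop :=
  w.getD p false = true ∧
  ∃ m, 0 < m ∧ p + m ≤ w.length ∧ C = (w.drop p).take m ∧
    elev δ w p (p + m) = 0 ∧ ∀ m', 0 < m' → m' < m → elev δ w p (p + m') ≠ 0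

/-- `C` is the excursion of the up step of `w` at position `p`: the smallest factor
of `w` starting at `p` that is itself a Dyck word. -/
def IsExcursionAt (w : List Bool) (p : ℕ) (C : List Bool) : Prop :=
  w.getD p false = true ∧
  ∃ m, 0 < m ∧ p + m ≤ w.length ∧ C = (w.drop p).take m ∧ IsDyckPath C ∧
    ∀ m', 0 < m' → m' < m → ¬ IsDyckPath ((w.drop p).take m')

/-- `ℓ_i(w; δ)`: the length of the δ-excursion of `u_i` in `w`. -/
noncomputable def excLen (δ : ℕ → ℤ) (w : List Bool) (i : ℕ) : ℕ :=
  sInf {m | 0 < m ∧ elev δ w (upPos w i) (upPos w i + m) = 0}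

/-- `Q` is the δ-rotation of `P` at some up step: `P = A d C B` with `d u_i` a valley
and `C` the δ-excursion of `u_i`, and `Q = A C d B`. -/
def DeltaRot (δ : ℕ → ℤ) (P Q : List Bool) : Prop :=
  ∃ A C B, P = A ++ false :: (C ++ B) ∧ Q = A ++ (C ++ false :: B) ∧
    IsDeltaExcAt δ P (A.length + 1) C

/-- The alt-Tamari order `Tam^δ`: reflexive transitive closure of δ-rotations. -/
def altLE (δ : ℕ → ℤ) : List Bool → List Bool → Prop :=
  Relation.ReflTransGen (DeltaRot δ)

/-- The Tamari order: the alt-Tamari order for `δ ≡ 1` (the δ-excursion of any up step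
is then its excursion). -/
def tamLE : List Bool → List Bool → Prop := altLE fun _ => 1

/-- The height (number of `u`'s minus number of `d`'s) of the length-`j` prefix of `w`. -/
def prefHeight (w : List Bool) (j : ℕ) : ℤ :=
  ((w.take j).count true : ℤ) - ((w.take j).count false : ℤ)

/-- The Dyck (inclusion) order: every prefix height of `P` is at most that of `Q`. -/
def dyckLE (P Q : List Bool) : Prop := ∀ j, prefHeight P j ≤ prefHeight Q j

/-- Strict version of a relation `le`. -/
def ltOf (le : List Bool → List Bool → Prop) (P Q : List Bool) : Prop :=
  le P Q ∧ ¬ le Q P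

/-- There is a strict chain `P = c 0 < c 1 < ⋯ < c k = Q` inside `S`. -/
def HasChainIn (S : Set (List Bool)) (le : List Bool → List Bool → Prop)
    (P Q : List Bool) (k : ℕ) : Prop :=
  ∃ c : ℕ → List Bool, c 0 = P ∧ c k = Q ∧ (∀ i ≤ k, c i ∈ S) ∧
    ∀ i < k, ltOf le (c i) (c (i + 1))

/-- The interval `[P,Q]` of the poset `(S, le)` has height `k`: `k` is the maximal
length of a chain from `P` to `Q`. -/
def IntervalHeight (S : Set (List Bool)) (le : List Bool → List Bool → Prop)
    (P Q : List Bool) (k : ℕ) : Prop :=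
  HasChainIn S le P Q k ∧ ∀ m, HasChainIn S le P Q m → m ≤ k

/-- The interval `[P,Q]` of the poset `(S, le)` is linear: it is totally ordered. -/
def LinearInterval (S : Set (List Bool)) (le : List Bool → List Bool → Prop)
    (P Q : List Bool) : Prop :=
  P ∈ S ∧ Q ∈ S ∧ le P Q ∧
  ∀ R R', R ∈ S → R' ∈ S → le P R → le R Q → le P R' → le R' Q → le R R' ∨ le R' R

/-- `Q` covers `P` in the poset `(S, le)`. -/
def CovIn (S : Set (List Bool)) (le : List Bool → List Bool → Prop)
    (P Q : List Bool) : Prop :=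
  P ∈ S ∧ Q ∈ S ∧ ltOf le P Q ∧ ∀ R ∈ S, ¬ (ltOf le P R ∧ ltOf le R Q)

/-- The number of valleys (factors `du`) of `w`. -/
def valleys (w : List Bool) : ℕ :=
  ((List.range w.length).filter fun q => !w.getD q true && w.getD (q + 1) false).length

/-!
Rotations increase a word lexicographically, so they generate a partial order, and a linear interval
of height `k` is a chain `c 0, …, c k` of rotations containing every element of the interval. In
particular no rotation of `c i` other than `c (i + 1)` lies below `c (i + 2)`. Two consecutive
rotations admit such a detour unless they move two adjacent down steps over the same δ-excursion or
one down step over two consecutive δ-excursions: otherwise the rotations can be exchanged. By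
induction along the chain the interval is then a left or a right interval, since a move of the first
kind cannot precede or follow one of the second kind.
-/

/-- A walk at altitude `a`, after `s` earlier up steps, reads `w` and reaches altitude `0` exactly
at the end of `w`, having been positive before: the recursive form of the first-return condition
that defines a δ-excursion. -/
def IsFirstPassage (δ : ℕ → ℤ) : ℕ → ℤ → List Bool → Prop
  | _, a, [] => a = 0
  | s, a, true :: w => 0 < a ∧ IsFirstPassage δ (s + 1) (a + δ (s + 1)) w
  | s, a, false :: w => 0 < a ∧ IsFirstPassage δ s (a - 1) w

/-- `C` is a δ-excursion in any word where it is preceded by exactly `s` up steps: a form of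
`IsDeltaExcAt` that does not mention the ambient word. -/
def IsDeltaExcAfter (δ : ℕ → ℤ) (s : ℕ) (C : List Bool) : Prop :=
  ∃ w, C = true :: w ∧ IsFirstPassage δ (s + 1) (δ (s + 1)) w

section FirstPassage

variable {δ : ℕ → ℤ} {s : ℕ} {a b : ℤ} {C C' D U V V' W : List Bool}

namespace IsFirstPassage

theorem pos (h : IsFirstPassage δ s a V) (hV : V ≠ []) : 0 < a := by
  match V, hV with
  | true :: _, _ => exact h.1
  | false :: _, _ => exact h.1

theorem prefix_of_le (hab : a ≤ b) (hU : IsFirstPassage δ s a U) (hV : IsFirstPassage δ s b V)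
    (hUW : U <+: W) (hVW : V <+: W) : U <+: V := by
  induction U generalizing s a b V W with
  | nil => exact V.nil_prefix
  | cons x U ih =>
    have ha : 0 < a := hU.pos (by simp)
    obtain ⟨W', rfl⟩ := hUW
    cases V with
    | nil => exact absurd hV (by simp only [IsFirstPassage]; omega)
    | cons y V =>
      obtain ⟨rfl, hVW'⟩ := List.cons_prefix_cons.1 hVW
      refine List.cons_prefix_cons.2 ⟨rfl, ?_⟩
      cases y <;> exact ih (by omega) hU.2 hV.2 (U.prefix_append W') hVW'

theorem append_mono
    (hV : ∀ b, IsFirstPassage δ (s + U.count true) b V → IsFirstPassage δ (s + U.count true) b V')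
    (h : IsFirstPassage δ s a (U ++ V)) : IsFirstPassage δ s a (U ++ V') := by
  induction U generalizing s a with
  | nil => exact hV a h
  | cons x U ih =>
    cases x
    · exact ⟨h.1, ih (by simpa using hV) h.2⟩
    · exact ⟨h.1, ih (by simpa [add_assoc, add_comm 1] using hV) h.2⟩

theorem exists_of_append (h : IsFirstPassage δ s a (U ++ V)) :
    ∃ b, IsFirstPassage δ (s + U.count true) b V := by
  induction U generalizing s a with
  | nil => exact ⟨a, h⟩
  | cons x U ih =>
    cases x
    · simpa using ih h.2
    · simpa [add_assoc, add_comm 1] using ih h.2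

theorem append_iff (hU : IsFirstPassage δ s a U) (hb : 0 < b) :
    IsFirstPassage δ s (a + b) (U ++ V) ↔ IsFirstPassage δ (s + U.count true) b V := by
  induction U generalizing s a with
  | nil =>
    obtain rfl : a = 0 := hU
    simp
  | cons x U ih =>
    have ha : 0 < a + b := by linarith [hU.pos (by simp)]
    cases x
    · simpa [IsFirstPassage, ha, sub_add_eq_add_sub] using ih hU.2
    · simpa [IsFirstPassage, ha, add_right_comm, add_assoc] using ih hU.2

end IsFirstPassage

namespace IsDeltaExcAfter

theorem ne_nil (h : IsDeltaExcAfter δ s C) : C ≠ [] := by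
  obtain ⟨w, rfl, -⟩ := h
  simp

theorem eq_of_prefix (h : IsDeltaExcAfter δ s C) (h' : IsDeltaExcAfter δ s C')
    (hCW : C <+: W) (hCW' : C' <+: W) : C = C' := by
  obtain ⟨w, rfl, hw⟩ := h
  obtain ⟨w', rfl, hw'⟩ := h'
  obtain ⟨W, rfl⟩ := hCW
  have hwW : w <+: w ++ W := w.prefix_append W
  have hwW' : w' <+: w ++ W := (List.cons_prefix_cons.1 hCW').2
  rw [(hw.prefix_of_le le_rfl hw' hwW hwW').eq_of_length_le
    (hw'.prefix_of_le le_rfl hw hwW' hwW).length_le]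

theorem isFirstPassage_append_iff (h : IsDeltaExcAfter δ s C) (hb : 0 < b) :
    IsFirstPassage δ s b (C ++ V) ↔ IsFirstPassage δ (s + C.count true) b V := by
  obtain ⟨w, rfl, hw⟩ := h
  simpa [IsFirstPassage, hb, add_assoc, add_comm 1, add_comm b] using hw.append_iff (V := V) hb

theorem prefix_of_isFirstPassage (h : IsDeltaExcAfter δ s C) (hb : 0 < b)
    (hV : IsFirstPassage δ s b V) (hCW : C <+: W) (hVW : V <+: W) : C <+: V := by
  obtain ⟨w, rfl, hw⟩ := h
  obtain ⟨W, rfl⟩ := hCW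
  cases V with
  | nil => exact absurd hV hb.ne'
  | cons x V =>
    obtain ⟨rfl, hVW'⟩ := List.cons_prefix_cons.1 hVW
    exact List.cons_prefix_cons.2
      ⟨rfl, hw.prefix_of_le (by omega) hV.2 (w.prefix_append W) hVW'⟩

theorem append_mono (hD : D ≠ [])
    (hV : ∀ b, IsFirstPassage δ (s + D.count true) b V → IsFirstPassage δ (s + D.count true) b V')
    (h : IsDeltaExcAfter δ s (D ++ V)) : IsDeltaExcAfter δ s (D ++ V') := by
  obtain ⟨w, hw, h⟩ := h
  obtain ⟨D', rfl, rfl⟩ := (List.append_eq_cons_iff.1 hw).resolve_left fun h' => hD h'.1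
  exact ⟨D' ++ V', rfl, h.append_mono (by simpa [add_assoc, add_comm 1] using hV)⟩

theorem exists_isFirstPassage (hD : D ≠ []) (h : IsDeltaExcAfter δ s (D ++ V)) :
    ∃ b, IsFirstPassage δ (s + D.count true) b V := by
  obtain ⟨w, hw, h⟩ := h
  obtain ⟨D', rfl, rfl⟩ := (List.append_eq_cons_iff.1 hw).resolve_left fun h' => hD h'.1
  simpa [add_assoc, add_comm 1] using h.exists_of_append

end IsDeltaExcAfter

end FirstPassage

section Nesting

variable {δ : ℕ → ℤ} {s : ℕ} {C D E F W : List Bool}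

namespace IsDeltaExcAfter

theorem prefix_of_append (hD : D ≠ []) (hE : E ≠ []) (h : IsDeltaExcAfter δ s (D ++ E))
    (hC : IsDeltaExcAfter δ (s + D.count true) C) (hCW : C <+: W) (hEW : E <+: W) : C <+: E := by
  obtain ⟨b, hb⟩ := h.exists_isFirstPassage hD
  exact hC.prefix_of_isFirstPassage (hb.pos hE) hb hCW hEW

theorem ne_nil_of_append (hD : D ≠ []) (h : IsDeltaExcAfter δ s (D ++ (C ++ F)))
    (hC : IsDeltaExcAfter δ (s + D.count true) C) : F ≠ [] := by
  rintro rfl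
  obtain ⟨b, hb⟩ := h.exists_isFirstPassage hD
  have hb0 : 0 < b := hb.pos (by simp [hC.ne_nil])
  exact hb0.ne' ((hC.isFirstPassage_append_iff hb0).1 hb)

theorem move_right (hD : D ≠ []) (h : IsDeltaExcAfter δ s (D ++ false :: (C ++ F)))
    (hC : IsDeltaExcAfter δ (s + D.count true) C) :
    IsDeltaExcAfter δ s (D ++ (C ++ false :: F)) := by
  refine h.append_mono hD ?_
  rintro b ⟨hb, hCF⟩
  refine (hC.isFirstPassage_append_iff hb).2 ⟨hb, ?_⟩
  exact (hC.isFirstPassage_append_iff (hCF.pos (by simp [hC.ne_nil]))).1 hCF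

theorem move_left (hD : D ≠ []) (hF : F ≠ []) (h : IsDeltaExcAfter δ s (D ++ (C ++ false :: F)))
    (hC : IsDeltaExcAfter δ (s + D.count true) C) :
    IsDeltaExcAfter δ s (D ++ false :: (C ++ F)) := by
  refine h.append_mono hD fun b hCF => ?_
  have hb : 0 < b := hCF.pos (by simp)
  have hF' := ((hC.isFirstPassage_append_iff hb).1 hCF).2
  exact ⟨hb, (hC.isFirstPassage_append_iff (hF'.pos hF)).2 hF'⟩

theorem append_false_iff (hD : D ≠ []) (hC : IsDeltaExcAfter δ (s + D.count true) C) :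
    IsDeltaExcAfter δ s (D ++ (C ++ [false])) ↔ IsDeltaExcAfter δ s (D ++ [false]) := by
  have hskip : ∀ b, IsFirstPassage δ (s + D.count true) b (C ++ [false]) ↔
      IsFirstPassage δ (s + D.count true) b [false] := fun b =>
    ⟨fun h => (hC.isFirstPassage_append_iff (h.pos (by simp))).1 h,
      fun h => (hC.isFirstPassage_append_iff (h.pos (by simp))).2 h⟩
  exact ⟨fun h => h.append_mono hD fun b => (hskip b).1,
    fun h => h.append_mono hD fun b => (hskip b).2⟩

end IsDeltaExcAfter

end Nesting

section Elevation

variable {δ : ℕ → ℤ}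

theorem elev_append_cons (A W : List Bool) (x : Bool) (m : ℕ) :
    elev δ (A ++ x :: W) A.length (A.length + (m + 1)) =
      (if x then δ (A.count true + 1) else -1) +
        elev δ (A ++ [x] ++ W) (A ++ [x]).length ((A ++ [x]).length + m) := by
  have htake : (A ++ x :: W).take (A.length + 1) = A ++ [x] := by simp [List.take_append]
  have hstep : stepVal δ (A ++ x :: W) A.length = if x then δ (A.count true + 1) else -1 := by
    cases x <;> simp [stepVal, htake]
  have hend : A.length + (m + 1) = (A ++ [x]).length + m := by simp; omega
  rw [elev, Finset.sum_eq_sum_Ico_succ_bot (by omega), hstep, hend]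
  simp [elev]

/-- Since up steps do not decrease the altitude and down steps decrease it by one, an altitude that
starts nonnegative is positive until it first vanishes. -/
theorem isFirstPassage_iff_elev (hδ : ∀ i, 0 ≤ δ i) (A U V : List Bool) {a : ℤ} (ha : 0 ≤ a) :
    IsFirstPassage δ (A.count true) a U ↔
      a + elev δ (A ++ (U ++ V)) A.length (A.length + U.length) = 0 ∧
        ∀ m < U.length, a + elev δ (A ++ (U ++ V)) A.length (A.length + m) ≠ 0 := by
  induction U generalizing A a with
  | nil => simp [IsFirstPassage, elev]
  | cons x U ih =>
    simp only [List.length_cons, Nat.forall_lt_succ_left, List.cons_append, elev_append_cons,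
      ← add_assoc a]
    have hzero : elev δ (A ++ x :: (U ++ V)) A.length (A.length + 0) = 0 := by simp [elev]
    rw [hzero, add_zero, and_left_comm, ← ha.lt_iff_ne']
    cases x
    · exact and_congr_right fun ha' => by
        simpa [← sub_eq_add_neg] using ih (A ++ [false]) (show 0 ≤ a - 1 by omega)
    · exact and_congr_right fun _ => by
        simpa using ih (A ++ [true]) (add_nonneg ha (hδ (A.count true + 1)))

theorem isDeltaExcAt_append_iff_elev (A C B : List Bool) :
    IsDeltaExcAt δ (A ++ (C ++ B)) A.length C ↔
      (∃ w, C = true :: w) ∧ elev δ (A ++ (C ++ B)) A.length (A.length + C.length) = 0 ∧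
        ∀ m < C.length, 0 < m → elev δ (A ++ (C ++ B)) A.length (A.length + m) ≠ 0 := by
  constructor
  · rintro ⟨hup, m, hm, hle, hC, helev⟩
    obtain rfl : C.length = m := by
      have hlen := congrArg List.length hC
      simp only [List.drop_left, List.length_take, List.length_append] at hlen hle
      omega
    refine ⟨?_, helev.1, fun m hmC hm => helev.2 m hm hmC⟩
    obtain ⟨x, w, rfl⟩ := List.exists_cons_of_length_pos hm
    exact ⟨w, by simpa using hup⟩
  · rintro ⟨⟨w, rfl⟩, hzero, hne⟩
    exact ⟨by simp, (true :: w).length, by simp, by simp, by simp, hzero,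
      fun m hm hmC => hne m hmC hm⟩

theorem isDeltaExcAt_append_iff (hδ : ∀ i, 0 ≤ δ i) (A C B : List Bool) :
    IsDeltaExcAt δ (A ++ (C ++ B)) A.length C ↔ IsDeltaExcAfter δ (A.count true) C := by
  rw [isDeltaExcAt_append_iff_elev, IsDeltaExcAfter, ← exists_and_right]
  refine exists_congr fun w => and_congr_right ?_
  rintro rfl
  simp only [List.length_cons, Nat.forall_lt_succ_left, List.cons_append, elev_append_cons]
  simpa using (isFirstPassage_iff_elev hδ (A ++ [true]) w B (hδ (A.count true + 1))).symm

theorem deltaRot_iff (hδ : ∀ i, 0 ≤ δ i) {P Q : List Bool} :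
    DeltaRot δ P Q ↔ ∃ A C B, P = A ++ false :: (C ++ B) ∧ Q = A ++ (C ++ false :: B) ∧
      IsDeltaExcAfter δ (A.count true) C := by
  refine exists_congr fun A => exists_congr fun C => exists_congr fun B =>
    and_congr_right fun hP => and_congr_right fun _ => ?_
  subst hP
  simpa using isDeltaExcAt_append_iff hδ (A ++ [false]) C B

end Elevation

section SaturatedChain

open Relation

variable {α : Type*} {r : α → α → Prop} {k : ℕ} {c : ℕ → α}

/-- `c 0, c 1, …, c k` is a chain of `r`-steps that exhausts the interval from `c 0` to `c k` of the
order generated by `r`. -/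
structure IsSaturatedChain (r : α → α → Prop) (k : ℕ) (c : ℕ → α) : Prop where
  step : ∀ i < k, r (c i) (c (i + 1))
  exists_eq : ∀ x, ReflTransGen r (c 0) x → ReflTransGen r x (c k) → ∃ i ≤ k, x = c i

theorem reflTransGen_of_le (h : ∀ i < k, ReflTransGen r (c i) (c (i + 1))) {i j : ℕ} (hij : i ≤ j)
    (hj : j ≤ k) : ReflTransGen r (c i) (c j) := by
  induction j, hij using Nat.le_induction with
  | base => exact .refl
  | succ j _ ih => exact (ih (by omega)).trans (h j hj)

theorem exists_eq_of_comparable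
    (hcov : ∀ i < k, ∀ x, ReflTransGen r (c i) x → ReflTransGen r x (c (i + 1)) →
      x = c i ∨ x = c (i + 1))
    {x : α} (hx : ReflTransGen r (c 0) x)
    (hcomp : ∀ i ≤ k, ReflTransGen r x (c i) ∨ ReflTransGen r (c i) x) :
    (∃ i ≤ k, x = c i) ∨ ReflTransGen r (c k) x := by
  refine or_iff_not_imp_left.2 fun hne => ?_
  push Not at hne
  have hbelow : ∀ j ≤ k, ReflTransGen r (c j) x := fun j => by
    induction j with
    | zero => exact fun _ => hx
    | succ j ih =>
      refine fun hj => (hcomp (j + 1) hj).resolve_left fun hxj => ?_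
      rcases hcov j hj x (ih (by omega)) hxj with h | h
      · exact hne j (by omega) h
      · exact hne (j + 1) hj h
  exact hbelow k le_rfl

namespace IsSaturatedChain

theorem tail (hr : ∀ x, ¬ TransGen r x x) (h : IsSaturatedChain r (k + 1) c) :
    IsSaturatedChain r k fun i => c (i + 1) where
  step i hi := h.step (i + 1) (by omega)
  exists_eq x hx hx' := by
    have hx0 : TransGen r (c 0) x := .head' (h.step 0 (by omega)) hx
    obtain ⟨_ | i, hi, rfl⟩ := h.exists_eq x hx0.to_reflTransGen hx'
    · exact absurd hx0 (hr _)
    · exact ⟨i, by omega, rfl⟩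

theorem exists_between (hr : ∀ x, ¬ TransGen r x x) (h : IsSaturatedChain r k c) {j : ℕ}
    (hj : j ≤ k) {x : α} (hx : TransGen r (c 0) x) (hxj : TransGen r x (c j)) :
    ∃ i, 0 < i ∧ i < j ∧ x = c i := by
  obtain ⟨i, hi, rfl⟩ := h.exists_eq x hx.to_reflTransGen
    (hxj.to_reflTransGen.trans (reflTransGen_of_le (fun i hi => .single (h.step i hi)) hj le_rfl))
  refine ⟨i, Nat.pos_of_ne_zero ?_, ?_, rfl⟩
  · rintro rfl
    exact hr _ hx
  · by_contra! hji
    exact hr _ (hxj.trans_left (reflTransGen_of_le (fun i hi => .single (h.step i hi)) hji hi))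

end IsSaturatedChain

end SaturatedChain

section LinearInterval

open Relation

variable {S : Set (List Bool)} {le r : List Bool → List Bool → Prop} {P Q R : List Bool} {k l : ℕ}
  {c : ℕ → List Bool}

theorem HasChainIn.trans (hPQ : HasChainIn S le P Q k) (hQR : HasChainIn S le Q R l) :
    HasChainIn S le P R (k + l) := by
  obtain ⟨c, rfl, rfl, hc, hclt⟩ := hPQ
  obtain ⟨d, hd0, rfl, hd, hdlt⟩ := hQR
  have hright : ∀ j, (if k + j ≤ k then c (k + j) else d (k + j - k)) = d j := by
    rintro (_ | j)
    · simp [hd0]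
    · simp
  refine ⟨fun i => if i ≤ k then c i else d (i - k), by simp, hright l, fun i hi => ?_,
    fun i hi => ?_⟩
  · dsimp only
    split_ifs with hik
    · exact hc i hik
    · exact hd _ (by omega)
  · rcases lt_or_ge i k with hik | hki
    · simpa [hik.le, Nat.succ_le_of_lt hik] using hclt i hik
    · obtain ⟨j, rfl⟩ := Nat.exists_eq_add_of_le hki
      simpa only [add_assoc, hright] using hdlt j (by omega)

theorem HasChainIn.single (hP : P ∈ S) (hQ : Q ∈ S) (h : ltOf le P Q) : HasChainIn S le P Q 1 :=
  ⟨fun i => if i = 0 then P else Q, rfl, rfl, fun i _ => by dsimp only; split_ifs <;> assumption,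
    fun i hi => by simpa [Nat.lt_one_iff.1 hi] using h⟩

theorem HasChainIn.segment (hmem : ∀ i ≤ k, c i ∈ S) (hlt : ∀ i < k, ltOf le (c i) (c (i + 1)))
    {i j : ℕ} (hij : i ≤ j) (hj : j ≤ k) : HasChainIn S le (c i) (c j) (j - i) :=
  ⟨fun m => c (i + m), rfl, by simp [hij], fun m hm => hmem _ (by omega),
    fun m hm => hlt (i + m) (by omega)⟩

theorem not_ltOf_between (hmem : ∀ i ≤ k, c i ∈ S) (hlt : ∀ i < k, ltOf le (c i) (c (i + 1)))
    (hmax : ∀ m, HasChainIn S le (c 0) (c k) m → m ≤ k) {i : ℕ} (hi : i < k) (hR : R ∈ S)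
    (hiR : ltOf le (c i) R) : ¬ ltOf le R (c (i + 1)) := by
  intro hRi
  have hbefore : HasChainIn S le (c 0) (c i) (i - 0) := .segment hmem hlt i.zero_le hi.le
  have hafter : HasChainIn S le (c (i + 1)) (c k) (k - (i + 1)) := .segment hmem hlt hi le_rfl
  have hlong := hmax _ (((hbefore.trans (.single (hmem i hi.le) hR hiR)).trans
    (.single hR (hmem _ hi) hRi)).trans hafter)
  omega

theorem ltOf_reflTransGen_of_ne (hr : ∀ P, ¬ TransGen r P P) (h : ReflTransGen r P Q)
    (hne : P ≠ Q) : ltOf (ReflTransGen r) P Q :=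
  ⟨h, fun h' => hr P (((reflTransGen_iff_eq_or_transGen.1 h).resolve_left hne.symm).trans_left h')⟩

theorem LinearInterval.exists_isSaturatedChain (hr : ∀ P, ¬ TransGen r P P)
    (hS : ∀ ⦃P Q⦄, r P Q → P ∈ S → Q ∈ S) (hlin : LinearInterval S (ReflTransGen r) P Q)
    (hht : IntervalHeight S (ReflTransGen r) P Q k) :
    ∃ c, c 0 = P ∧ c k = Q ∧ IsSaturatedChain r k c := by
  obtain ⟨⟨c, rfl, rfl, hmem, hlt⟩, hmax⟩ := hht
  obtain ⟨-, -, -, htotal⟩ := hlin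
  have hS' : ∀ {P Q}, P ∈ S → ReflTransGen r P Q → Q ∈ S := fun hP h => by
    induction h with
    | refl => exact hP
    | tail _ h ih => exact hS h ih
  have hcov : ∀ i < k, ∀ R, ReflTransGen r (c i) R → ReflTransGen r R (c (i + 1)) →
      R = c i ∨ R = c (i + 1) := fun i hi R h h' => by
    by_contra! hne
    exact not_ltOf_between hmem hlt hmax hi (hS' (hmem i hi.le) h)
      (ltOf_reflTransGen_of_ne hr h hne.1.symm) (ltOf_reflTransGen_of_ne hr h' hne.2)
  have hmono {i j : ℕ} (hij : i ≤ j) (hj : j ≤ k) : ReflTransGen r (c i) (c j) :=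
    reflTransGen_of_le (fun i hi => (hlt i hi).1) hij hj
  refine ⟨c, rfl, rfl, fun i hi => ?_, fun R hPR hRQ => ?_⟩
  · obtain heq | ⟨R, hR, hR'⟩ := (hlt i hi).1.cases_head
    · exact absurd (heq ▸ .refl) (hlt i hi).2
    · obtain rfl | rfl := hcov i hi R (.single hR) hR'
      · exact absurd (.single hR) (hr _)
      · exact hR
  · have hcomp : ∀ i ≤ k, ReflTransGen r R (c i) ∨ ReflTransGen r (c i) R := fun i hi =>
      htotal R (c i) (hS' (hmem 0 k.zero_le) hPR) (hmem i hi) hPR hRQ (hmono i.zero_le hi)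
        (hmono hi le_rfl)
    rcases exists_eq_of_comparable hcov hPR hcomp with hR | hQR
    · exact hR
    · by_contra! hne
      exact (ltOf_reflTransGen_of_ne hr hRQ (hne k le_rfl)).2 hQR

end LinearInterval

section Rotation

open Relation

variable {δ : ℕ → ℤ} {P Q : List Bool} {n s : ℕ} {C : List Bool}

theorem deltaRot_of_isDeltaExcAfter (hδ : ∀ i, 0 ≤ δ i) (A C B : List Bool)
    (hC : IsDeltaExcAfter δ (A.count true) C) (hP : P = A ++ false :: (C ++ B))
    (hQ : Q = A ++ (C ++ false :: B)) : DeltaRot δ P Q :=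
  (deltaRot_iff hδ).2 ⟨A, C, B, hP, hQ, hC⟩

theorem IsDeltaExcAfter.append_false_cons_lt (hC : IsDeltaExcAfter δ s C) (A U V : List Bool) :
    A ++ false :: U < A ++ (C ++ V) := by
  obtain ⟨w, rfl, -⟩ := hC
  exact List.append_left_lt (List.cons_lt_cons_iff.2 (Or.inl Bool.false_lt_true))

theorem DeltaRot.lt (hδ : ∀ i, 0 ≤ δ i) (h : DeltaRot δ P Q) : P < Q := by
  obtain ⟨A, C, B, rfl, rfl, hC⟩ := (deltaRot_iff hδ).1 h
  exact hC.append_false_cons_lt A _ _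

theorem not_transGen_deltaRot_self (hδ : ∀ i, 0 ≤ δ i) (P : List Bool) :
    ¬ TransGen (DeltaRot δ) P P := fun h =>
  lt_irrefl P (transGen_minimal (r' := (· < ·)) (fun _ _ => DeltaRot.lt hδ) P P h)

theorem count_true_take_false_cons_le (C B : List Bool) (j : ℕ) :
    ((false :: (C ++ B)).take j).count true ≤ ((C ++ false :: B).take j).count true := by
  induction C generalizing j with
  | nil => rfl
  | cons x C ih =>
    match j with
    | 0 => simp
    | 1 => simp
    | j + 2 => simpa [List.count_cons] using ih (j + 1)

theorem DeltaRot.mem_dyckSet (h : DeltaRot δ P Q) (hP : P ∈ DyckSet n) : Q ∈ DyckSet n := by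
  obtain ⟨A, C, B, rfl, rfl, -⟩ := h
  obtain ⟨htrue, hfalse, hprefix⟩ := hP
  have hperm : (A ++ (C ++ false :: B)).Perm (A ++ false :: (C ++ B)) :=
    List.perm_middle.append_left A
  refine ⟨by rw [hperm.count_eq, htrue], by rw [hperm.count_eq, hfalse], fun p hp => ?_⟩
  obtain ⟨q, hq, hqp, hcount⟩ : ∃ q, q <+: A ++ false :: (C ++ B) ∧ q.length = p.length ∧
      q.count true ≤ p.count true := by
    refine ⟨_, List.take_prefix p.length _, ?_, ?_⟩
    · exact List.length_take_of_le (hperm.length_eq ▸ hp.length_le)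
    · rw [List.prefix_iff_eq_take.1 hp, List.length_take_of_le hp.length_le]
      simpa only [List.take_append, List.count_append, add_le_add_iff_left] using
        count_true_take_false_cons_le C B (p.length - A.length)
  have hpq := hprefix q hq
  have hp' := List.count_true_add_count_false p
  have hq' := List.count_true_add_count_false q
  omega

end Rotation

section Detour

open Relation

variable {δ : ℕ → ℤ} {A B C D E F A' B' C' : List Bool}

/-- Some rotation of `P` other than `P₁` lies strictly below `P₂`. This is what fails for the first
three elements `P`, `P₁`, `P₂` of a linear interval. -/
def HasDetour (δ : ℕ → ℤ) (P P₁ P₂ : List Bool) : Prop :=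
  ∃ R ≠ P₁, DeltaRot δ P R ∧ TransGen (DeltaRot δ) R P₂

theorem hasDetour_of_later (hδ : ∀ i, 0 ≤ δ i) (hC : IsDeltaExcAfter δ (A.count true) C)
    (hC' : IsDeltaExcAfter δ (A.count true + C.count true + E.count true) C') :
    HasDetour δ (A ++ false :: (C ++ (E ++ false :: (C' ++ B))))
      (A ++ (C ++ false :: (E ++ false :: (C' ++ B))))
      (A ++ (C ++ false :: (E ++ (C' ++ false :: B)))) :=
  ⟨A ++ false :: (C ++ (E ++ (C' ++ false :: B))), (hC.append_false_cons_lt A _ _).ne,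
    deltaRot_of_isDeltaExcAfter hδ (A ++ false :: (C ++ E)) C' B
      (by simpa [add_assoc] using hC') (by simp) (by simp),
    .single (deltaRot_of_isDeltaExcAfter hδ A C _ hC rfl rfl)⟩

theorem hasDetour_of_earlier (hδ : ∀ i, 0 ≤ δ i) (hC' : IsDeltaExcAfter δ (A.count true) C')
    (hC : IsDeltaExcAfter δ (A.count true + C'.count true + E.count true) C) :
    HasDetour δ (A ++ false :: (C' ++ (E ++ false :: (C ++ B))))
      (A ++ false :: (C' ++ (E ++ (C ++ false :: B))))
      (A ++ (C' ++ false :: (E ++ (C ++ false :: B)))) :=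
  ⟨A ++ (C' ++ false :: (E ++ false :: (C ++ B))), (hC'.append_false_cons_lt A _ _).ne',
    deltaRot_of_isDeltaExcAfter hδ A C' _ hC' rfl rfl,
    .single (deltaRot_of_isDeltaExcAfter hδ (A ++ (C' ++ false :: E)) C B
      (by simpa [add_assoc] using hC) (by simp) (by simp))⟩

theorem hasDetour_of_inner (hδ : ∀ i, 0 ≤ δ i) (hD : D ≠ [])
    (hC : IsDeltaExcAfter δ (A.count true) (D ++ false :: (C' ++ F)))
    (hC' : IsDeltaExcAfter δ (A.count true + D.count true) C') :
    HasDetour δ (A ++ false :: (D ++ false :: (C' ++ (F ++ B))))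
      (A ++ (D ++ false :: (C' ++ (F ++ false :: B))))
      (A ++ (D ++ (C' ++ false :: (F ++ false :: B)))) :=
  ⟨A ++ false :: (D ++ (C' ++ false :: (F ++ B))),
    by simpa using (hC.append_false_cons_lt A _ (false :: B)).ne,
    deltaRot_of_isDeltaExcAfter hδ (A ++ false :: D) C' (F ++ B)
      (by simpa using hC') (by simp) (by simp),
    .single (deltaRot_of_isDeltaExcAfter hδ A (D ++ (C' ++ false :: F)) B (hC.move_right hD hC')
      (by simp) (by simp))⟩

theorem hasDetour_of_outer (hδ : ∀ i, 0 ≤ δ i) (hD : D ≠ []) (hF : F ≠ [])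
    (hC' : IsDeltaExcAfter δ (A.count true) (D ++ (C ++ false :: F)))
    (hC : IsDeltaExcAfter δ (A.count true + D.count true) C) :
    HasDetour δ (A ++ false :: (D ++ false :: (C ++ (F ++ B))))
      (A ++ false :: (D ++ (C ++ false :: (F ++ B))))
      (A ++ (D ++ (C ++ false :: (F ++ false :: B)))) := by
  have houter := hC'.move_left hD hF hC
  exact ⟨A ++ (D ++ false :: (C ++ (F ++ false :: B))),
    by simpa using (houter.append_false_cons_lt A _ (false :: B)).ne',
    deltaRot_of_isDeltaExcAfter hδ A (D ++ false :: (C ++ F)) B houter (by simp) (by simp),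
    .single (deltaRot_of_isDeltaExcAfter hδ (A ++ D) C (F ++ false :: B)
      (by simpa using hC) (by simp) (by simp))⟩

theorem hasDetour_of_outer_ending (hδ : ∀ i, 0 ≤ δ i)
    (hDd : IsDeltaExcAfter δ (A.count true) (D ++ [false]))
    (hC : IsDeltaExcAfter δ (A.count true + D.count true) C) :
    HasDetour δ (A ++ false :: (D ++ false :: (C ++ B)))
      (A ++ false :: (D ++ (C ++ false :: B)))
      (A ++ (D ++ (C ++ false :: false :: B))) := by
  have hrot : ∀ U, DeltaRot δ (A ++ (D ++ false :: (C ++ U))) (A ++ (D ++ (C ++ false :: U))) :=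
    fun U => deltaRot_of_isDeltaExcAfter hδ (A ++ D) C U (by simpa using hC)
      (by simp) (by simp)
  have hrot' : DeltaRot δ (A ++ (D ++ false :: false :: (C ++ B)))
      (A ++ (D ++ false :: (C ++ false :: B))) :=
    deltaRot_of_isDeltaExcAfter hδ (A ++ (D ++ [false])) C B
      (by simpa using hC) (by simp) (by simp)
  exact ⟨A ++ (D ++ false :: false :: (C ++ B)),
    by simpa using (hDd.append_false_cons_lt A _ (false :: (C ++ B))).ne',
    deltaRot_of_isDeltaExcAfter hδ A (D ++ [false]) (C ++ B) hDd (by simp) (by simp),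
    .head hrot' (.single (hrot _))⟩

theorem append_eq_append_cons_iff {α : Type*} {U V X Y : List α} {x : α} :
    U ++ V = X ++ x :: Y ↔
      (∃ D, U = X ++ x :: D ∧ Y = D ++ V) ∨ ∃ D, X = U ++ D ∧ V = D ++ x :: Y := by
  rw [List.append_eq_append_iff]
  constructor
  · rintro (⟨D, rfl, rfl⟩ | ⟨_ | ⟨y, D⟩, rfl, h⟩)
    · exact Or.inr ⟨D, rfl, rfl⟩
    · exact Or.inr ⟨[], by simp, by simpa using h.symm⟩
    · obtain ⟨rfl, rfl⟩ := List.cons_eq_cons.1 h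
      exact Or.inl ⟨D, rfl, rfl⟩
  · rintro (⟨D, rfl, rfl⟩ | ⟨D, rfl, rfl⟩)
    · exact Or.inr ⟨x :: D, rfl, rfl⟩
    · exact Or.inl ⟨D, rfl, rfl⟩

theorem hasDetour_of_down_before (hδ : ∀ i, 0 ≤ δ i) (hD : D ≠ [])
    (hC : IsDeltaExcAfter δ (A.count true + D.count true) C)
    (hC' : IsDeltaExcAfter δ (A.count true) C') (hword : D ++ (C ++ false :: B) = C' ++ B') :
    HasDetour δ (A ++ false :: (D ++ false :: (C ++ B)))
      (A ++ false :: (D ++ (C ++ false :: B))) (A ++ (C' ++ false :: B')) := by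
  have hdisjoint : ∀ E, D = C' ++ E → B' = E ++ (C ++ false :: B) → HasDetour δ
      (A ++ false :: (D ++ false :: (C ++ B))) (A ++ false :: (D ++ (C ++ false :: B)))
      (A ++ (C' ++ false :: B')) := by
    rintro E rfl rfl
    simpa using hasDetour_of_earlier hδ hC' (E := E) (by simpa [add_assoc] using hC)
  obtain ⟨E, rfl, hE⟩ | ⟨E, hDE, hE⟩ := List.append_eq_append_iff.1 hword
  · obtain rfl | hE0 := eq_or_ne E []
    · exact hdisjoint [] (by simp) (by simpa using hE.symm)
    obtain ⟨F, rfl⟩ := hC'.prefix_of_append hD hE0 hC (C.prefix_append _)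
      (hE ▸ E.prefix_append B')
    obtain ⟨x, F, rfl⟩ := List.exists_cons_of_ne_nil (hC'.ne_nil_of_append hD hC)
    obtain ⟨rfl, rfl⟩ : x = false ∧ B = F ++ B' := by simpa [eq_comm] using hE
    obtain rfl | hF := eq_or_ne F []
    · simpa using hasDetour_of_outer_ending hδ ((IsDeltaExcAfter.append_false_iff hD hC).1 hC') hC
    · simpa using hasDetour_of_outer hδ hD hF hC' hC
  · exact hdisjoint E hDE hE

theorem hasDetour_of_down_inside (hδ : ∀ i, 0 ≤ δ i)
    (hC : IsDeltaExcAfter δ (A.count true) (D ++ false :: E))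
    (hC' : IsDeltaExcAfter δ (A.count true + D.count true) C')
    (hword : C' ++ B' = E ++ false :: B) :
    HasDetour δ (A ++ false :: (D ++ false :: (E ++ B)))
      (A ++ (D ++ false :: (E ++ false :: B))) (A ++ (D ++ (C' ++ false :: B'))) := by
  have hD : D ≠ [] := by
    rintro rfl
    simp [IsDeltaExcAfter] at hC
  have hE : E ≠ [] := by
    rintro rfl
    obtain ⟨w, rfl, -⟩ := hC'
    simp at hword
  have hDE : IsDeltaExcAfter δ (A.count true) ((D ++ [false]) ++ E) := by simpa using hC
  obtain ⟨F, rfl⟩ := hDE.prefix_of_append (by simp) hE (by simpa using hC') (C'.prefix_append B')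
    (hword ▸ E.prefix_append _)
  obtain rfl : B' = F ++ false :: B := by simpa using hword
  simpa using hasDetour_of_inner hδ hD hC hC'

/-- The three outcomes are told apart by the position of the second moved down step in the first
rotated word. -/
theorem hasDetour_or_eq_of_rotations (hδ : ∀ i, 0 ≤ δ i) (hC : IsDeltaExcAfter δ (A.count true) C)
    (hC' : IsDeltaExcAfter δ (A'.count true) C')
    (hword : A ++ (C ++ false :: B) = A' ++ false :: (C' ++ B')) :
    HasDetour δ (A ++ false :: (C ++ B)) (A ++ (C ++ false :: B)) (A' ++ (C' ++ false :: B')) ∨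
      (A = A' ++ [false] ∧ C = C' ∧ B' = false :: B) ∨ (A' = A ++ C ∧ B = C' ++ B') := by
  obtain ⟨D, rfl, hD⟩ | ⟨D, rfl, hD⟩ := append_eq_append_cons_iff.1 hword
  · obtain rfl | hD0 := eq_or_ne D []
    · obtain rfl : C = C' := IsDeltaExcAfter.eq_of_prefix (by simpa using hC) hC'
        (C.prefix_append (false :: B)) ⟨B', by simpa using hD⟩
      exact Or.inr (Or.inl ⟨rfl, rfl, by simpa using hD⟩)
    · left
      simpa using hasDetour_of_down_before hδ hD0 (by simpa using hC) hC' hD.symm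
  · obtain ⟨E, rfl, hE⟩ | ⟨E, rfl, hE⟩ := append_eq_append_cons_iff.1 hD
    · left
      simpa using hasDetour_of_down_inside hδ hC (by simpa using hC') hE
    · obtain _ | ⟨x, E⟩ := E
      · exact Or.inr (Or.inr ⟨by simp, by simpa using hE⟩)
      · obtain ⟨rfl, rfl⟩ := List.cons_eq_cons.1 hE
        left
        simpa using hasDetour_of_later hδ hC (E := E) (by simpa [add_assoc] using hC')

end Detour

section Classification

open Relation

variable {δ : ℕ → ℤ} {k : ℕ} {c : ℕ → List Bool} {A B C D : List Bool}

/-- The elements `c 0, …, c k` of a left interval: `k` down steps move one after the other over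
a δ-excursion. -/
def IsLeftChain (δ : ℕ → ℤ) (k : ℕ) (c : ℕ → List Bool) : Prop :=
  ∃ A C B, IsDeltaExcAfter δ (A.count true) C ∧ ∀ i ≤ k, c i =
    A ++ (List.replicate (k - i) false ++ (C ++ (List.replicate i false ++ B)))

/-- The elements `c 0, …, c k` of a right interval: one down step moves over `k` consecutive
δ-excursions, listed in `Cs`. -/
def IsRightChain (δ : ℕ → ℤ) (k : ℕ) (c : ℕ → List Bool) : Prop :=
  ∃ (A B : List Bool) (Cs : List (List Bool)), Cs.length = k ∧
    (∀ j < k, IsDeltaExcAfter δ (A.count true + (Cs.take j).flatten.count true) (Cs.getD j [])) ∧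
    ∀ i ≤ k, c i = A ++ ((Cs.take i).flatten ++ false :: ((Cs.drop i).flatten ++ B))

namespace IsSaturatedChain

theorem not_hasDetour (hδ : ∀ i, 0 ≤ δ i) (hk : 2 ≤ k) (h : IsSaturatedChain (DeltaRot δ) k c) :
    ¬ HasDetour δ (c 0) (c 1) (c 2) := by
  rintro ⟨R, hR1, hR, hR2⟩
  obtain ⟨i, hi, hi2, rfl⟩ := h.exists_between (not_transGen_deltaRot_self hδ) hk (.single hR) hR2
  obtain rfl : i = 1 := by omega
  exact hR1 rfl

theorem eq_or_eq_of_rotation (hδ : ∀ i, 0 ≤ δ i) (hk : 2 ≤ k)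
    (h : IsSaturatedChain (DeltaRot δ) k c) (hC : IsDeltaExcAfter δ (A.count true) C)
    (h1 : c 1 = A ++ false :: (C ++ B)) (h2 : c 2 = A ++ (C ++ false :: B)) :
    (∃ B₀, B = false :: B₀ ∧ c 0 = A ++ false :: false :: (C ++ B₀)) ∨
      ∃ A₀ C₀, IsDeltaExcAfter δ (A₀.count true) C₀ ∧ A = A₀ ++ C₀ ∧
        c 0 = A₀ ++ false :: (C₀ ++ (C ++ B)) := by
  obtain ⟨A₀, C₀, B₀, h0, h1', hC₀⟩ := (deltaRot_iff hδ).1 (h.step 0 (by omega))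
  have hdetour := h.not_hasDetour hδ hk
  rw [h0, h1', h2] at hdetour
  rcases (hasDetour_or_eq_of_rotations hδ hC₀ hC (h1'.symm.trans h1)).resolve_left hdetour with
    ⟨rfl, rfl, rfl⟩ | ⟨rfl, rfl⟩
  · exact Or.inl ⟨B₀, rfl, by simp [h0]⟩
  · exact Or.inr ⟨A₀, C₀, hC₀, rfl, h0⟩

/-- If the down step after `D` ended a δ-excursion, `c 0` would also lead to `c 3` by two rotations:
the second down step moves over `C`, then the first one over `D ++ C ++ [false]`. -/
theorem not_isDeltaExcAfter_append_false (hδ : ∀ i, 0 ≤ δ i) (hk : 3 ≤ k)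
    (h : IsSaturatedChain (DeltaRot δ) k c) (hC : IsDeltaExcAfter δ (A.count true + D.count true) C)
    (h0 : c 0 = A ++ false :: (D ++ false :: (C ++ B)))
    (h1 : c 1 = A ++ (D ++ false :: false :: (C ++ B)))
    (h2 : c 2 = A ++ (D ++ false :: (C ++ false :: B)))
    (h3 : c 3 = A ++ (D ++ (C ++ false :: false :: B))) :
    ¬ IsDeltaExcAfter δ (A.count true) (D ++ [false]) := by
  intro hDd
  have hD : D ≠ [] := by
    rintro rfl
    simp [IsDeltaExcAfter] at hDd
  have hDCd := (IsDeltaExcAfter.append_false_iff hD hC).2 hDd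
  have hstart : DeltaRot δ (c 0) (A ++ false :: (D ++ (C ++ false :: B))) :=
    deltaRot_of_isDeltaExcAfter hδ (A ++ false :: D) C B (by simpa using hC) (by simp [h0])
      (by simp)
  have hend : DeltaRot δ (A ++ false :: (D ++ (C ++ false :: B))) (c 3) :=
    deltaRot_of_isDeltaExcAfter hδ A (D ++ (C ++ [false])) B hDCd (by simp) (by simp [h3])
  obtain ⟨i, hi, hi3, hR⟩ :=
    h.exists_between (not_transGen_deltaRot_self hδ) hk (.single hstart) (.single hend)
  refine absurd hR (ne_of_lt ?_)
  obtain rfl | rfl : i = 1 ∨ i = 2 := by omega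
  · simpa [h1] using hDd.append_false_cons_lt A (D ++ (C ++ false :: B)) (false :: (C ++ B))
  · simpa [h2] using hDd.append_false_cons_lt A (D ++ (C ++ false :: B)) (C ++ false :: B)

theorem isLeftChain_one (hδ : ∀ i, 0 ≤ δ i) (h : IsSaturatedChain (DeltaRot δ) 1 c) :
    IsLeftChain δ 1 c := by
  obtain ⟨A, C, B, h0, h1, hC⟩ := (deltaRot_iff hδ).1 (h.step 0 one_pos)
  exact ⟨A, C, B, hC, fun i hi => by interval_cases i <;> simp [h0, h1]⟩

theorem isLeftChain_or_isRightChain_two (hδ : ∀ i, 0 ≤ δ i)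
    (h : IsSaturatedChain (DeltaRot δ) 2 c) : IsLeftChain δ 2 c ∨ IsRightChain δ 2 c := by
  obtain ⟨A, C, B, h1, h2, hC⟩ := (deltaRot_iff hδ).1 (h.step 1 one_lt_two)
  rcases h.eq_or_eq_of_rotation hδ le_rfl hC h1 h2 with ⟨B₀, rfl, h0⟩ | ⟨A₀, C₀, hC₀, rfl, h0⟩
  · refine Or.inl ⟨A, C, B₀, hC, fun i hi => ?_⟩
    interval_cases i <;> simp [h0, h1, h2, List.replicate_succ]
  · refine Or.inr ⟨A₀, B, [C₀, C], rfl, fun j hj => ?_, fun i hi => ?_⟩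
    · interval_cases j
      · simpa using hC₀
      · simpa using hC
    · interval_cases i <;> simp [h0, h1, h2]

theorem isLeftChain_of_tail (hδ : ∀ i, 0 ≤ δ i) (hk : 2 ≤ k)
    (h : IsSaturatedChain (DeltaRot δ) (k + 1) c) (htail : IsLeftChain δ k fun i => c (i + 1)) :
    IsLeftChain δ (k + 1) c := by
  obtain ⟨m, rfl⟩ := Nat.exists_eq_add_of_le' hk
  obtain ⟨A, C, B, hC, hc⟩ := htail
  have h1 : c 1 = A ++ List.replicate (m + 1) false ++ false :: (C ++ B) := by
    simpa [List.replicate_succ'] using hc 0 (by omega)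
  have h2 : c 2 = A ++ List.replicate (m + 1) false ++ (C ++ false :: B) := by
    simpa using hc 1 (by omega)
  have hC' : IsDeltaExcAfter δ ((A ++ List.replicate (m + 1) false).count true) C := by
    simpa [List.count_replicate] using hC
  rcases h.eq_or_eq_of_rotation hδ (by omega) hC' h1 h2 with
    ⟨B₀, rfl, h0⟩ | ⟨A₀, C₀, hC₀, hA, h0⟩
  · refine ⟨A, C, B₀, hC, fun i hi => ?_⟩
    obtain _ | i := i
    · simpa [List.replicate_succ'] using h0
    · simpa [List.replicate_succ'] using hc i (by omega)
  · obtain ⟨D, rfl⟩ : ∃ D, C₀ = D ++ [false] := by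
      have hlast := congrArg List.getLast? hA
      rw [List.getLast?_append_of_ne_nil _ hC₀.ne_nil] at hlast
      exact List.getLast?_eq_some_iff.1 (hlast.symm.trans (by simp [List.replicate_succ']))
    have hAD : A ++ List.replicate m false = A₀ ++ D := by
      rw [List.replicate_succ', ← List.append_assoc, ← List.append_assoc] at hA
      exact List.append_cancel_right hA
    have h3 : c 3 = A₀ ++ (D ++ (C ++ false :: false :: B)) := by
      rw [← List.append_assoc, ← hAD]
      simpa [List.replicate_succ] using hc 2 (by omega)
    rw [hA] at h1 h2 hC'
    exact absurd hC₀ (h.not_isDeltaExcAfter_append_false hδ (by omega) (by simpa using hC')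
      (by simpa using h0) (by simpa using h1) (by simpa using h2) h3)

theorem isRightChain_of_tail (hδ : ∀ i, 0 ≤ δ i) (hk : 2 ≤ k)
    (h : IsSaturatedChain (DeltaRot δ) (k + 1) c) (htail : IsRightChain δ k fun i => c (i + 1)) :
    IsRightChain δ (k + 1) c := by
  obtain ⟨A, B, Cs, rfl, hCs, hc⟩ := htail
  obtain ⟨C₁, C₂, Cs, rfl⟩ : ∃ C₁ C₂ Cs', Cs = C₁ :: C₂ :: Cs' := by
    match Cs, hk with
    | C₁ :: C₂ :: Cs', _ => exact ⟨C₁, C₂, Cs', rfl⟩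
  have hC₁ : IsDeltaExcAfter δ (A.count true) C₁ := by simpa using hCs 0 (by omega)
  have hC₂ : IsDeltaExcAfter δ (A.count true + C₁.count true) C₂ := by simpa using hCs 1 (by omega)
  have h1 : c 1 = A ++ false :: (C₁ ++ (C₂ ++ (Cs.flatten ++ B))) := by
    simpa using hc 0 (by omega)
  have h2 : c 2 = A ++ (C₁ ++ false :: (C₂ ++ (Cs.flatten ++ B))) := by
    simpa using hc 1 (by omega)
  rcases h.eq_or_eq_of_rotation hδ (by omega) hC₁ h1 h2 with ⟨B₀, hB, -⟩ | ⟨A₀, C₀, hC₀, rfl, h0⟩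
  · obtain ⟨w, rfl, -⟩ := hC₂
    simp at hB
  · refine ⟨A₀, B, C₀ :: C₁ :: C₂ :: Cs, rfl, fun j hj => ?_, fun i hi => ?_⟩
    · obtain _ | j := j
      · simpa using hC₀
      · simpa [add_assoc] using hCs j (by simpa using hj)
    · obtain _ | i := i
      · simpa using h0
      · simpa using hc i (by simpa using hi)

theorem isLeftChain_or_isRightChain (hδ : ∀ i, 0 ≤ δ i) (hk : 1 ≤ k)
    (h : IsSaturatedChain (DeltaRot δ) k c) : IsLeftChain δ k c ∨ IsRightChain δ k c := by
  induction k, hk using Nat.le_induction generalizing c with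
  | base => exact Or.inl (h.isLeftChain_one hδ)
  | succ k hk ih =>
    obtain rfl | hk := hk.eq_or_lt
    · exact h.isLeftChain_or_isRightChain_two hδ
    · exact (ih (h.tail (not_transGen_deltaRot_self hδ))).imp (h.isLeftChain_of_tail hδ hk)
        (h.isRightChain_of_tail hδ hk)

end IsSaturatedChain

theorem IsLeftChain.exists_isDeltaExcAt (hδ : ∀ i, 0 ≤ δ i) (h : IsLeftChain δ k c) :
    ∃ A C B : List Bool,
      c 0 = A ++ (List.replicate k false ++ (C ++ B)) ∧
      c k = A ++ (C ++ (List.replicate k false ++ B)) ∧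
      IsDeltaExcAt δ (c 0) (A.length + k) C := by
  obtain ⟨A, C, B, hC, hc⟩ := h
  have h0 : c 0 = A ++ (List.replicate k false ++ (C ++ B)) := by simpa using hc 0 k.zero_le
  refine ⟨A, C, B, h0, by simpa using hc k le_rfl, ?_⟩
  rw [h0]
  simpa using (isDeltaExcAt_append_iff hδ (A ++ List.replicate k false) C B).2
    (by simpa [List.count_replicate] using hC)

theorem IsRightChain.exists_isDeltaExcAt (hδ : ∀ i, 0 ≤ δ i) (h : IsRightChain δ k c) :
    ∃ (A B : List Bool) (Cs : List (List Bool)), Cs.length = k ∧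
      c 0 = A ++ false :: (Cs.flatten ++ B) ∧
      c k = A ++ (Cs.flatten ++ false :: B) ∧
      ∀ j < k, IsDeltaExcAt δ (c 0) (A.length + 1 + ((Cs.take j).flatten).length)
        (Cs.getD j []) := by
  obtain ⟨A, B, Cs, rfl, hCs, hc⟩ := h
  have h0 : c 0 = A ++ false :: (Cs.flatten ++ B) := by simpa using hc 0 Cs.length.zero_le
  refine ⟨A, B, Cs, rfl, h0, by simpa using hc _ le_rfl, fun j hj => ?_⟩
  have hsplit : Cs.flatten =
      (Cs.take j).flatten ++ (Cs.getD j [] ++ (Cs.drop (j + 1)).flatten) := by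
    rw [List.getD_eq_getElem _ _ hj, ← List.flatten_cons, ← List.drop_eq_getElem_cons hj,
      ← List.flatten_append, List.take_append_drop]
  rw [h0, hsplit]
  simpa [add_assoc, add_comm 1] using
    (isDeltaExcAt_append_iff hδ (A ++ false :: (Cs.take j).flatten) (Cs.getD j [])
      ((Cs.drop (j + 1)).flatten ++ B)).2 (by simpa using hCs j hj)

end Classification

theorem stmt16_general {k : ℕ} (hk : 1 ≤ k) {δ : ℕ → ℤ} (hδ : ∀ i, 0 ≤ δ i)
    {S : Set (List Bool)} (hS : ∀ ⦃P Q⦄, DeltaRot δ P Q → P ∈ S → Q ∈ S) {P Q : List Bool}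
    (hlin : LinearInterval S (altLE δ) P Q) (hht : IntervalHeight S (altLE δ) P Q k) :
    (∃ A C B : List Bool,
        P = A ++ (List.replicate k false ++ (C ++ B)) ∧
        Q = A ++ (C ++ (List.replicate k false ++ B)) ∧
        IsDeltaExcAt δ P (A.length + k) C) ∨
    (∃ (A B : List Bool) (Cs : List (List Bool)), Cs.length = k ∧
        P = A ++ false :: (Cs.flatten ++ B) ∧
        Q = A ++ (Cs.flatten ++ false :: B) ∧
        ∀ j < k, IsDeltaExcAt δ P (A.length + 1 + ((Cs.take j).flatten).length)
          (Cs.getD j [])) := by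
  obtain ⟨c, rfl, rfl, hc⟩ := hlin.exists_isSaturatedChain (not_transGen_deltaRot_self hδ) hS hht
  exact (hc.isLeftChain_or_isRightChain hδ hk).imp (·.exists_isDeltaExcAt hδ)
    (·.exists_isDeltaExcAt hδ)

/-- every linear interval of height `k ≥ 2` in `Tam^δ_n` is a left or a
right interval. -/
theorem stmt16 (n k : ℕ) (hk : 2 ≤ k) (δ : ℕ → ℤ) (hδ : IsIncFun δ)
    (P Q : List Bool)
    (hlin : LinearInterval (DyckSet n) (altLE δ) P Q)
    (hht : IntervalHeight (DyckSet n) (altLE δ) P Q k) :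
    (∃ A C B : List Bool,
        P = A ++ (List.replicate k false ++ (C ++ B)) ∧
        Q = A ++ (C ++ (List.replicate k false ++ B)) ∧
        IsDeltaExcAt δ P (A.length + k) C) ∨
    (∃ (A B : List Bool) (Cs : List (List Bool)), Cs.length = k ∧
        P = A ++ false :: (Cs.flatten ++ B) ∧
        Q = A ++ (Cs.flatten ++ false :: B) ∧
        ∀ j < k, IsDeltaExcAt δ P (A.length + 1 + ((Cs.take j).flatten).length)
          (Cs.getD j [])) := by
  exact stmt16_general (by omega) (fun i => by rcases hδ i with h | h <;> simp [h])
    (fun _ _ => DeltaRot.mem_dyckSet) hlin hht
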